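/- Let L be a finite lattice with minimum 0̂ and maximum 1̂, 0̂ ≠ 1̂; set L̄ = L∖{0̂} and Ľ = L∖{0̂,1̂}. Fix a synor complex S_*(L̄) ⊆ C̃_*(L̄) and maps ρ_k satisfying (R0)–(R2). Let γ = 1̂*ζ ∈ S_m(L̄)^{(1̂)} be a principal synor chain, let 1 ≤ ℓ ≤ m, and let γ = Σ_{χ∈X_ℓ^γ} χ*ζ_χ be its ℓ-representation. Then γ is homologous to Σ_{χ∈X_ℓ^γ} π(ρ_ℓ(χ) ⧢ ζ_χ) in the relative homology H̃_m(L̄, Ľ). -/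

import Mathlib

open Finsupp

noncomputable section

variable (K : Type) [Field K]

section Core
variable (P : Type) [Preorder P]

/-- Order chains with `n` elements of the poset `P`, written as strictly
decreasing tuples `(x₀ > x₁ > ⋯ > x_{n-1})`. -/
def OChain (n : ℕ) : Type := {c : Fin n → P // StrictAnti c}

/-- The chain group in "level" `n`: the `K`-vector space with basis the order chains with
`n` elements.  Level `n` corresponds to homological degree `n - 1`; in particular
`CGrp K P 0 ≅ K` is the reduced part `C̃₋₁`. -/
abbrev CGrp (n : ℕ) : Type := OChain P n →₀ K

/-- Deletion of the `k`-th entry of an order chain. -/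
def odel {n : ℕ} (k : Fin (n + 1)) (c : OChain P (n + 1)) : OChain P n :=
  ⟨c.1 ∘ k.succAbove, c.2.comp_strictMono (Fin.strictMono_succAbove k)⟩

/-- The simplicial boundary map (of the reduced simplicial chain complex of the order
complex), from level `n+1` to level `n`. -/
def cbdry (n : ℕ) : CGrp K P (n + 1) →ₗ[K] CGrp K P n :=
  Finsupp.lsum K fun c => ∑ k : Fin (n + 1), ((-1 : K) ^ (k : ℕ)) • Finsupp.lsingle (odel P k c)

/-- The cycles in level `n` (every level-0 chain, i.e. multiple of the empty chain,
is a cycle). -/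
def cyclesAt : (n : ℕ) → Submodule K (CGrp K P n)
  | 0 => ⊤
  | (n + 1) => LinearMap.ker (cbdry K P n)

/-- The boundaries in level `n`. -/
def boundariesIn (n : ℕ) : Submodule K (CGrp K P n) :=
  LinearMap.range (cbdry K P n)

/-- `H̃_{n-1}(P) ≠ 0`: nontriviality of the reduced simplicial homology (with coefficients
in `K`) of the order complex of `P` in degree `n - 1` (level `n`). -/
def RHomNontrivial (n : ℕ) : Prop := ¬ cyclesAt K P n ≤ boundariesIn K P n

/-- The subspace of chains all of whose elements lie in the subset `J ⊆ P`
(the chain group of the subposet `J`). -/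
def chainsIn (J : Set P) (n : ℕ) : Submodule K (CGrp K P n) :=
  Finsupp.supported K K {c : OChain P n | ∀ r, c.1 r ∈ J}

/-- Transport of chain groups along an equality of levels. -/
def castCGrp {a b : ℕ} (h : a = b) : CGrp K P a ≃ₗ[K] CGrp K P b :=
  Finsupp.domLCongr (Equiv.cast (congrArg (OChain P) h))

end Core


section Synor
variable (P : Type) [PartialOrder P]

/-- For a family `S` of graded pieces (with `S n x` the piece of homological degree `n`,
i.e. level `n+1`, sitting over `x ∈ P`) and a subset `J ⊆ P`, the part of the complex
lying over `J`: at level `0` it is all of `C̃₋₁ = K`, and at level `n+1` it is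
`⊕_{x ∈ J} S_n^{(x)}`. -/
def idealPart (S : (n : ℕ) → P → Submodule K (CGrp K P (n + 1))) (J : Set P) :
    (nn : ℕ) → Submodule K (CGrp K P nn)
  | 0 => ⊤
  | (n + 1) => ⨆ x ∈ J, S n x

/-- A synor complex for the finite poset `P`: a strictly `P`-graded subcomplex
`S_*(P) ⊆ C̃_*(P)` of the reduced simplicial chain complex of the order complex of `P`
(we identify the injective `P`-graded chain map `φ` with the inclusion of its image) with:
`S_i(P) = ⊕_{x ∈ P} S_i(P)^{(x)}` with `S_i(P)^{(x)}` contained in the span of the order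
chains with largest element `x` (`graded`); `∂(S_i(P)^{(x)}) ⊆ ⊕_{y<x} S_{i-1}(P)^{(y)}`
(`strict`; for degree `0` the boundary lands in `C̃₋₁ = K` automatically); (S1)
`dim_K S_i(P)^{(x)} = dim_K H̃_{i-1}(P_{<x})` (`dim_eq`, the dimension of the reduced
homology being the dimension of the cycles minus the dimension of the boundaries); and
(S2) for every order ideal `J ⊆ P` the inclusion `S_*(P)^J ⊆ C̃_*(J)` induces an
isomorphism on homology (`quasiIso`: surjectivity and injectivity of the induced map). -/
structure SynorComplex : Type where
  S : (n : ℕ) → P → Submodule K (CGrp K P (n + 1))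
  graded : ∀ (n : ℕ) (x : P),
    S n x ≤ Finsupp.supported K K {c : OChain P (n + 1) | c.1 0 = x}
  strict : ∀ (n : ℕ) (x : P), ∀ f ∈ S (n + 1) x,
    cbdry K P (n + 1) f ∈ ⨆ y ∈ Set.Iio x, S n y
  dim_eq : ∀ (n : ℕ) (x : P),
    Module.finrank K ↥(S n x) =
      Module.finrank K ↥(cyclesAt K {y : P // y < x} n) -
        Module.finrank K ↥(boundariesIn K {y : P // y < x} n)
  quasiIso : ∀ J : Set P, IsLowerSet J → ∀ nn : ℕ,
    (∀ z ∈ cyclesAt K P nn ⊓ chainsIn K P J nn,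
        ∃ a ∈ cyclesAt K P nn ⊓ idealPart K P S J nn,
          z - a ∈ Submodule.map (cbdry K P nn) (chainsIn K P J (nn + 1))) ∧
    (∀ a ∈ idealPart K P S J nn,
        a ∈ Submodule.map (cbdry K P nn) (chainsIn K P J (nn + 1)) →
        a ∈ Submodule.map (cbdry K P nn) (idealPart K P S J (nn + 1)))

end Synor

section Repr
variable (P : Type) [PartialOrder P]

/-- Concatenation `χ * c` of two order chains, valid when every entry of `c` is strictly
below every entry of `χ`. -/
def concatOC {a b : ℕ} (χ : OChain P a) (c : OChain P b)
    (h : ∀ (s : Fin b) (r : Fin a), c.1 s < χ.1 r) : OChain P (a + b) :=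
  ⟨fun r => if hr : (r : ℕ) < a then χ.1 ⟨r, hr⟩
            else c.1 ⟨(r : ℕ) - a, by have := r.2; omega⟩, by
    intro p q hpq
    dsimp only
    rcases lt_or_ge (q : ℕ) a with hq | hq
    · have hp : (p : ℕ) < a := by have := Fin.lt_def.mp hpq; omega
      rw [dif_pos hp, dif_pos hq]
      exact χ.2 (Fin.mk_lt_mk.mpr (Fin.lt_def.mp hpq))
    · rw [dif_neg (not_lt.mpr hq)]
      rcases lt_or_ge (p : ℕ) a with hp | hp
      · rw [dif_pos hp]
        exact h _ _
      · rw [dif_neg (not_lt.mpr hp)]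
        exact c.2 (Fin.mk_lt_mk.mpr (by have := Fin.lt_def.mp hpq; omega))⟩

open Classical in
/-- The linear map `χ * (-)` prepending the order chain `χ` to every order chain of a
chain (declared as `0` on the basis chains that are not entirely below `χ`). -/
def prependC {a b : ℕ} (χ : OChain P a) : CGrp K P b →ₗ[K] CGrp K P (a + b) :=
  Finsupp.lsum K fun c =>
    if h : ∀ (s : Fin b) (r : Fin a), c.1 s < χ.1 r then
      Finsupp.lsingle (concatOC P χ c h)
    else 0

/-- `X_ℓ^γ` (for `s = ℓ + 1`): the set of order chains with `s` elements occurring as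
initial segments of order chains in the support of `γ`. -/
def initSegs {m : ℕ} (γ : CGrp K P (m + 1)) (s : ℕ) (h : s ≤ m + 1) :
    Set (OChain P s) :=
  {χ | ∃ c ∈ γ.support, ∀ r : Fin s, c.1 (Fin.castLE h r) = χ.1 r}

end Repr

section Multi
variable (L : Type) [SemilatticeSup L]

/-- Order multichains with `n` entries (length `n - 1`) in the lattice `L`:
weakly decreasing tuples `(c₀ ≥ c₁ ≥ ⋯ ≥ c_{n-1})`. -/
def MChain (n : ℕ) : Type := {c : Fin n → L // Antitone c}

/-- `∂ₖ^{(j)}`: deletion of the `k`-th entry of an order multichain. -/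
def mdel {n : ℕ} (k : Fin (n + 1)) (c : MChain L (n + 1)) : MChain L n :=
  ⟨c.1 ∘ k.succAbove, c.2.comp_monotone (Fin.strictMono_succAbove k).monotone⟩

/-- Concatenation `c · c′` of tuples. -/
def concatT {a b n : ℕ} (h : a + b = n) (u : Fin a → L) (v : Fin b → L) : Fin n → L :=
  fun r => if hr : (r : ℕ) < a then u ⟨r, hr⟩ else v ⟨(r : ℕ) - a, by have := r.2; omega⟩

/-- The operator `τ` sending a tuple `(a₀, …, a_{n-1})` to the multichain
`(a₀ ∨ ⋯ ∨ a_{n-1} ≥ a₁ ∨ ⋯ ∨ a_{n-1} ≥ ⋯ ≥ a_{n-1})` of suffix joins. -/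
def tauMul {n : ℕ} (a : Fin n → L) : MChain L n :=
  ⟨fun r => (Finset.Ici r).sup' ⟨r, Finset.mem_Ici.mpr le_rfl⟩ a, by
    intro r r' hrr'
    apply Finset.sup'_le
    intro s hs
    exact Finset.le_sup' _ (Finset.mem_Ici.mpr (le_trans hrr' (Finset.mem_Ici.mp hs)))⟩

/-- An `(i,j)`-shuffle, in block form: `IsShuffleBlocks t σ` says that the permutation `σ`
is monotone on the preimage of the values `{0, …, t-1}` (the first block) and on the
preimage of the remaining values (the second block).  An `(i,j)`-shuffle of
`{0, 1, …, i+j+1}` is exactly `IsShuffleBlocks (i+1)`. -/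
def IsShuffleBlocks {n : ℕ} (t : ℕ) (σ : Equiv.Perm (Fin n)) : Prop :=
  (∀ p q : Fin n, p < q → (σ p : ℕ) < t → (σ q : ℕ) < t → σ p < σ q) ∧
  (∀ p q : Fin n, p < q → t ≤ (σ p : ℕ) → t ≤ (σ q : ℕ) → σ p < σ q)

/-- The index `ℓ - 1` (with the convention `0 - 1 = 0`). -/
def prevIdx {n : ℕ} (ℓ : Fin n) : Fin n := ⟨(ℓ : ℕ) - 1, by have := ℓ.2; omega⟩

/-- The set `A₁^{i,j}` of pairs `(ℓ, σ)` with `σ` an `(i,j)`-shuffle, `ℓ ≥ 1`,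
`σ(ℓ-1) ∈ {0,…,i}` and `σ(ℓ) ∈ {i+1,…,i+j+1}`. -/
def shuffleA1 (i j : ℕ) : Set (Fin (i + j + 2) × Equiv.Perm (Fin (i + j + 2))) :=
  {p | IsShuffleBlocks (i + 1) p.2 ∧ 1 ≤ (p.1 : ℕ) ∧
       (p.2 (prevIdx p.1) : ℕ) ≤ i ∧ i + 1 ≤ (p.2 p.1 : ℕ)}

/-- The set `A₂^{i,j}` of pairs `(ℓ, σ)` with `σ` an `(i,j)`-shuffle, `ℓ ≥ 1`,
`σ(ℓ-1) ∈ {i+1,…,i+j+1}` and `σ(ℓ) ∈ {0,…,i}`. -/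
def shuffleA2 (i j : ℕ) : Set (Fin (i + j + 2) × Equiv.Perm (Fin (i + j + 2))) :=
  {p | IsShuffleBlocks (i + 1) p.2 ∧ 1 ≤ (p.1 : ℕ) ∧
       i + 1 ≤ (p.2 (prevIdx p.1) : ℕ) ∧ (p.2 p.1 : ℕ) ≤ i}

/-- The set `A₃^{i,j}` of pairs `(ℓ, σ)` with `σ` an `(i,j)`-shuffle and
`σ(ℓ-1), σ(ℓ) ∈ {0,…,i}`, the condition on `σ(ℓ-1)` being regarded as true for `ℓ = 0`. -/
def shuffleA3 (i j : ℕ) : Set (Fin (i + j + 2) × Equiv.Perm (Fin (i + j + 2))) :=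
  {p | IsShuffleBlocks (i + 1) p.2 ∧
       (1 ≤ (p.1 : ℕ) → (p.2 (prevIdx p.1) : ℕ) ≤ i) ∧ (p.2 p.1 : ℕ) ≤ i}

/-- `M̃`: the `K`-vector space with basis the order multichains with `n` entries
(length `n-1`).  In particular `MGrp K L 0 ≅ K` is `M̃₋₁`, spanned by the empty
multichain. -/
abbrev MGrp (n : ℕ) : Type := MChain L n →₀ K

/-- The simplicial boundary `∂ = Σ (-1)^j ∂^{(j)}` on multichains. -/
def mbdry (n : ℕ) : MGrp K L (n + 1) →ₗ[K] MGrp K L n :=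
  Finsupp.lsum K fun c => ∑ k : Fin (n + 1), ((-1 : K) ^ (k : ℕ)) • Finsupp.lsingle (mdel L k c)

/-- Transport along an equality of lengths. -/
def castMGrp {a b : ℕ} (h : a = b) : MGrp K L a ≃ₗ[K] MGrp K L b :=
  Finsupp.domLCongr (Equiv.cast (congrArg (MChain L) h))

open Classical in
/-- The shuffle product of two basis multichains, with `p` resp. `q` entries:
`c ⧢ c′ = Σ_{σ ∈ S_{p-1,q-1}} sgn(σ) · τ((c·c′)_σ)`. -/
def shufPair {p q : ℕ} (c : MChain L p) (c' : MChain L q) : MGrp K L (p + q) :=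
  ∑ σ : Equiv.Perm (Fin (p + q)),
    if IsShuffleBlocks p σ then
      ((Equiv.Perm.sign σ : ℤ) : K) • Finsupp.single (tauMul L (concatT L rfl c.1 c'.1 ∘ ⇑σ)) 1
    else 0

/-- The shuffle product `⧢ : M̃_{p-1} ⊗ M̃_{q-1} → M̃_{p+q-1}` as a bilinear map. -/
def shufLin (p q : ℕ) : MGrp K L p →ₗ[K] MGrp K L q →ₗ[K] MGrp K L (p + q) :=
  Finsupp.lsum K fun c =>
    LinearMap.toSpanSingleton K _
      (Finsupp.lsum K fun c' => LinearMap.toSpanSingleton K _ (shufPair K L c c'))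

open Classical in
/-- The projection `π : M̃ → C̃` which is the identity on strictly decreasing multichains
and vanishes on multichains with a repeated entry. -/
def piProj (n : ℕ) : MGrp K L n →ₗ[K] CGrp K L n :=
  Finsupp.lsum K fun c =>
    if h : StrictAnti c.1 then Finsupp.lsingle (⟨c.1, h⟩ : OChain L n) else 0

/-- The inclusion `C̃ → M̃` of order chains into multichains. -/
def iotaCM (n : ℕ) : CGrp K L n →ₗ[K] MGrp K L n :=
  Finsupp.lmapDomain K K fun c => (⟨c.1, c.2.antitone⟩ : MChain L n)

end Multi

section Punct

/-- Transport of order chains along an equality of lengths. -/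
def castOC {P : Type} [Preorder P] {a b : ℕ} (h : a = b) (c : OChain P a) : OChain P b :=
  h ▸ c

/-- `L̄ = L ∖ {0̂}`, the lattice `L` with its bottom element removed.  It is closed under
joins, hence a join-semilattice. -/
abbrev Punct (L : Type) [Lattice L] [OrderBot L] : Type := {y : L // y ≠ ⊥}

instance instPunctSemilatticeSup (L : Type) [Lattice L] [OrderBot L] :
    SemilatticeSup (Punct L) :=
  Subtype.semilatticeSup (by
    intro x y hx _ h
    exact hx (le_bot_iff.mp (h ▸ le_sup_left)))

end Punct

/-!
Suffix joins of non-shuffle permutations of `c · c'` have a repeated entry, so `π(c ⧢ c')` is the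
signed sum of `τ((c · c')_σ)` over all permutations `σ`, projected by `π`. In the boundary of this
alternating sum only the deletion of the first entry survives, and this gives the Leibniz rule for
`(u, v) ↦ π(u ⧢ v)`. Taking `u = (x)`, every cycle in `L_{≤ x}` is the boundary of its cone with
apex `x`, whence inductively a chain homotopy `H` with `∂H + H∂ = 1 - ρ` such that `H(c)` lies in
`L_{≤ x₀}` for `c = (x₀ > ⋯ > x_k)`.

Since each `ζ_χ` is a cycle,
`γ - ∑ π(ρ(χ) ⧢ ζ_χ) = ∂ (∑ π(H(χ) ⧢ ζ_χ)) + ∑ π(H(∂χ) ⧢ ζ_χ)`, and the last sum arises from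
`∂γ = ∑ ∂χ * ζ_χ` by applying `H` to initial segments. It therefore lies in the order ideal
`L ∖ {1̂}` because `∂γ` does.
-/

section Chains
variable {K}

lemma supported_le_iff {R α : Type*} [Semiring R] {s : Set α} {N : Submodule R (α →₀ R)} :
    supported R R s ≤ N ↔ ∀ a ∈ s, single a 1 ∈ N := by
  rw [supported_eq_span_single, Submodule.span_le, Set.image_subset_iff]
  rfl

lemma linearMap_ext_single_one {R α M : Type*} [Semiring R] [AddCommMonoid M] [Module R M]
    {f g : (α →₀ R) →ₗ[R] M} (h : ∀ a, f (single a 1) = g (single a 1)) : f = g :=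
  lhom_ext' fun a => LinearMap.ext_ring (h a)

lemma eqOn_supported {R α M : Type*} [Semiring R] [AddCommMonoid M] [Module R M] {s : Set α}
    {f g : (α →₀ R) →ₗ[R] M} (h : ∀ a ∈ s, f (single a 1) = g (single a 1)) :
    Set.EqOn f g (supported R R s) := fun _ hv =>
  (supported_le_iff (N := LinearMap.eqLocus f g)).mpr h hv

variable {P : Type} [Preorder P]

lemma cbdry_single {n : ℕ} (c : OChain P (n + 1)) :
    cbdry K P n (single c 1) = ∑ k : Fin (n + 1), (-1 : K) ^ (k : ℕ) • single (odel P k c) 1 := by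
  simp [cbdry]

lemma odel_odel_of_le {n : ℕ} (c : OChain P (n + 2)) {i j : Fin (n + 1)} (hij : i ≤ j) :
    odel P j (odel P i.castSucc c) = odel P i (odel P j.succ c) := by
  have hswap := Fin.removeNth_removeNth_eq_swap c.1 j i.castSucc
  rw [Fin.succAbove_of_le_castSucc _ _ (Fin.castSucc_le_castSucc_iff.mpr hij),
    Fin.predAbove_of_le_castSucc _ _ (Fin.castSucc_le_castSucc_iff.mpr hij),
    Fin.castPred_castSucc] at hswap
  exact Subtype.ext hswap

lemma cbdry_comp_cbdry (n : ℕ) : (cbdry K P n).comp (cbdry K P (n + 1)) = 0 := by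
  refine linearMap_ext_single_one fun c => ?_
  simp only [LinearMap.comp_apply, cbdry_single, map_sum, map_smul, Finset.smul_sum,
    Fin.sum_sum_eq_sum_triangle_add, LinearMap.zero_apply]
  refine Finset.sum_eq_zero fun i _ => Finset.sum_eq_zero fun j hj => ?_
  rw [odel_odel_of_le c (Finset.mem_Ici.mp hj), smul_smul, smul_smul, ← add_smul, Fin.val_succ,
    Fin.val_castSucc, pow_succ]
  ring_nf
  exact zero_smul K _

lemma chainsIn_zero (J : Set P) : chainsIn K P J 0 = ⊤ := by
  simp [chainsIn]

lemma chainsIn_mono {I J : Set P} (h : I ⊆ J) (n : ℕ) : chainsIn K P I n ≤ chainsIn K P J n :=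
  supported_mono fun _ hc r => h (hc r)

lemma cbdry_mem_chainsIn {J : Set P} {n : ℕ} {u : CGrp K P (n + 1)}
    (hu : u ∈ chainsIn K P J (n + 1)) : cbdry K P n u ∈ chainsIn K P J n := by
  suffices h : chainsIn K P J (n + 1) ≤ (chainsIn K P J n).comap (cbdry K P n) from h hu
  refine supported_le_iff.mpr fun c hc => ?_
  rw [Submodule.mem_comap, cbdry_single]
  exact Submodule.sum_mem _ fun k _ => Submodule.smul_mem _ _ <|
    single_mem_supported K _ fun r => hc (k.succAbove r)

/-- The initial segment of an order chain consisting of its first `a` entries. -/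
def OChain.take {a b n : ℕ} (h : a + b = n) (c : OChain P n) : OChain P a :=
  ⟨c.1 ∘ Fin.castLE (by omega), c.2.comp_strictMono (Fin.strictMono_castLE _)⟩

/-- The final segment of an order chain left after deleting its first `a` entries. -/
def OChain.drop {a b n : ℕ} (h : a + b = n) (c : OChain P n) : OChain P b :=
  ⟨c.1 ∘ Fin.cast h ∘ Fin.natAdd a,
    c.2.comp_strictMono ((Fin.cast_strictMono h).comp (Fin.strictMono_natAdd a))⟩

/-- The order chain with the single entry `x`. -/
def OChain.point (x : P) : OChain P 1 := ⟨fun _ => x, Subsingleton.strictAnti _⟩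

lemma SynorComplex.iSup_le_chainsIn {P : Type} [PartialOrder P] (σ : SynorComplex K P) (n : ℕ)
    {J : Set P} (hJ : IsLowerSet J) : ⨆ y ∈ J, σ.S n y ≤ chainsIn K P J (n + 1) :=
  iSup₂_le fun y hy => (σ.graded n y).trans <| supported_mono fun c (hc : c.1 0 = y) r =>
    hJ (c.2.antitone (Fin.zero_le r)) (hc ▸ hy)

lemma SynorComplex.cbdry_mem_chainsIn_Iio {P : Type} [PartialOrder P] (σ : SynorComplex K P)
    {n : ℕ} {x : P} {f : CGrp K P (n + 1)} (hf : f ∈ σ.S n x) :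
    cbdry K P n f ∈ chainsIn K P (Set.Iio x) n := by
  cases n with
  | zero => simp [chainsIn_zero]
  | succ n => exact σ.iSup_le_chainsIn n (isLowerSet_Iio x) (σ.strict n x f hf)

end Chains

section Multichains
variable {K} {L : Type} [SemilatticeSup L]

/-- An order chain regarded as a multichain. -/
def OChain.toMChain {n : ℕ} (c : OChain L n) : MChain L n := ⟨c.1, c.2.antitone⟩

lemma exists_toMChain_eq {n : ℕ} {c : MChain L n} (h : StrictAnti c.1) :
    ∃ d : OChain L n, d.toMChain = c :=
  ⟨⟨c.1, h⟩, rfl⟩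

lemma tauMul_le {n : ℕ} {a : Fin n → L} {r : Fin n} {x : L} (h : ∀ s, r ≤ s → a s ≤ x) :
    (tauMul L a).1 r ≤ x :=
  Finset.sup'_le Finset.nonempty_Ici a fun s hs => h s (Finset.mem_Ici.mp hs)

lemma le_tauMul {n : ℕ} (a : Fin n → L) {r s : Fin n} (h : r ≤ s) : a s ≤ (tauMul L a).1 r :=
  Finset.le_sup' a (Finset.mem_Ici.mpr h)

lemma tauMul_coe {n : ℕ} (c : OChain L n) : tauMul L c.1 = c.toMChain :=
  Subtype.ext <| funext fun _ =>
    le_antisymm (tauMul_le fun _ hs => c.2.antitone hs) (le_tauMul c.1 le_rfl)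

lemma not_strictAnti_tauMul {n : ℕ} {a : Fin n → L} {p q : Fin n} (hpq : p < q)
    (ha : a p ≤ a q) : ¬ StrictAnti (tauMul L a).1 := by
  intro hanti
  have hsucc : (p : ℕ) + 1 < n := by omega
  refine (hanti (show p < ⟨p + 1, hsucc⟩ from Nat.lt_succ_self _)).not_ge (tauMul_le fun s hs => ?_)
  obtain rfl | hps := hs.eq_or_lt
  · exact ha.trans (le_tauMul a hpq)
  · exact le_tauMul a hps

lemma mdel_zero_tauMul {n : ℕ} (a : Fin (n + 1) → L) :
    mdel L 0 (tauMul L a) = tauMul L (a ∘ Fin.succ) := by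
  refine Subtype.ext (funext fun r => le_antisymm (tauMul_le fun s hs => ?_)
    (tauMul_le fun s hs => le_tauMul a (by simpa using hs)))
  obtain ⟨t, rfl⟩ := Fin.exists_succ_eq.mpr
    ((Fin.succ_pos r).trans_le (by simpa using hs)).ne'
  exact le_tauMul (a ∘ Fin.succ) (by simpa using hs)

lemma tauMul_comp_swap_le {n : ℕ} (a : Fin n → L) {i j r : Fin n} (hr : r ≤ i ↔ r ≤ j) :
    (tauMul L (a ∘ Equiv.swap i j)).1 r ≤ (tauMul L a).1 r := by
  refine tauMul_le fun s hs => le_tauMul a ?_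
  rw [Equiv.swap_apply_def]
  grind

lemma mdel_succ_tauMul_comp_swap {n : ℕ} (a : Fin (n + 1) → L) (j : Fin n) :
    mdel L j.succ (tauMul L (a ∘ Equiv.swap j.castSucc j.succ)) = mdel L j.succ (tauMul L a) := by
  refine Subtype.ext (funext fun r => ?_)
  have hr : j.succ.succAbove r ≤ j.castSucc ↔ j.succ.succAbove r ≤ j.succ := by
    have hne := Fin.succAbove_ne j.succ r
    simp only [Fin.le_def, ne_eq, Fin.ext_iff, Fin.val_succ, Fin.val_castSucc] at *
    omega
  refine le_antisymm (tauMul_comp_swap_le a hr) ?_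
  have h := tauMul_comp_swap_le (a ∘ Equiv.swap j.castSucc j.succ) hr
  rwa [Function.comp_assoc, ← Equiv.Perm.coe_mul, Equiv.swap_mul_self, Equiv.Perm.coe_one,
    Function.comp_id] at h

lemma mbdry_single {n : ℕ} (c : MChain L (n + 1)) :
    mbdry K L n (single c 1) = ∑ k : Fin (n + 1), (-1 : K) ^ (k : ℕ) • single (mdel L k c) 1 := by
  simp [mbdry]

lemma piProj_single_toMChain {n : ℕ} (c : OChain L n) :
    piProj K L n (single c.toMChain 1) = single c 1 := by
  simp only [piProj, lsum_single]
  rw [dif_pos (show StrictAnti c.toMChain.1 from c.2)]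
  rfl

lemma piProj_single_of_not_strictAnti {n : ℕ} {c : MChain L n} (h : ¬ StrictAnti c.1) :
    piProj K L n (single c 1) = 0 := by
  simp [piProj, h]

lemma piProj_single_mem_chainsIn {n : ℕ} {c : MChain L n} {J : Set L} (hc : ∀ r, c.1 r ∈ J) :
    piProj K L n (single c 1) ∈ chainsIn K L J n := by
  by_cases h : StrictAnti c.1
  · obtain ⟨d, rfl⟩ := exists_toMChain_eq h
    rw [piProj_single_toMChain]
    exact single_mem_supported K _ hc
  · rw [piProj_single_of_not_strictAnti h]
    exact Submodule.zero_mem _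

lemma iotaCM_single {n : ℕ} (c : OChain L n) :
    iotaCM K L n (single c 1) = single c.toMChain 1 :=
  mapDomain_single

lemma exists_castSucc_eq_succ_of_not_strictAnti {n : ℕ} {c : MChain L (n + 1)}
    (h : ¬ StrictAnti c.1) : ∃ j : Fin n, c.1 j.castSucc = c.1 j.succ := by
  by_contra! hne
  exact h (Fin.strictAnti_iff_succ_lt.mpr fun j =>
    (c.2 Fin.castSucc_lt_succ.le).lt_of_ne (hne j).symm)

lemma mdel_castSucc_eq_mdel_succ {n : ℕ} {c : MChain L (n + 1)} {j : Fin n}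
    (hj : c.1 j.castSucc = c.1 j.succ) : mdel L j.castSucc c = mdel L j.succ c := by
  refine Subtype.ext (funext fun r => ?_)
  change c.1 (j.castSucc.succAbove r) = c.1 (j.succ.succAbove r)
  obtain rfl | hne := eq_or_ne r j
  · simp [hj]
  · have hsucc : j.castSucc.succAbove r = j.succ.succAbove r := by
      simp only [Fin.succAbove, Fin.lt_def, Fin.val_castSucc, Fin.val_succ]
      grind
    rw [hsucc]

lemma not_strictAnti_mdel {n : ℕ} {c : MChain L (n + 1)} {i j k : Fin (n + 1)} (hij : i ≠ j)
    (hc : c.1 i = c.1 j) (hi : i ≠ k) (hj : j ≠ k) : ¬ StrictAnti (mdel L k c).1 := by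
  intro hanti
  obtain ⟨r, rfl⟩ := Fin.exists_succAbove_eq hi
  obtain ⟨s, rfl⟩ := Fin.exists_succAbove_eq hj
  exact hij (congrArg k.succAbove (hanti.injective hc))

lemma piProj_mbdry_single_of_not_strictAnti {n : ℕ} {c : MChain L (n + 1)}
    (h : ¬ StrictAnti c.1) : piProj K L n (mbdry K L n (single c 1)) = 0 := by
  obtain ⟨j, hj⟩ := exists_castSucc_eq_succ_of_not_strictAnti h
  have hne : j.castSucc ≠ j.succ := Fin.castSucc_lt_succ.ne
  rw [mbdry_single, map_sum, Fintype.sum_eq_add j.castSucc j.succ hne]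
  · simp [mdel_castSucc_eq_mdel_succ hj, pow_succ]
  · rintro k ⟨hk, hk'⟩
    rw [map_smul, piProj_single_of_not_strictAnti (not_strictAnti_mdel hne hj hk.symm hk'.symm),
      smul_zero]

lemma cbdry_piProj {n : ℕ} (f : MGrp K L (n + 1)) :
    cbdry K L n (piProj K L (n + 1) f) = piProj K L n (mbdry K L n f) := by
  suffices h : (cbdry K L n).comp (piProj K L (n + 1)) = (piProj K L n).comp (mbdry K L n) from
    LinearMap.congr_fun h f
  refine linearMap_ext_single_one fun c => ?_
  rw [LinearMap.comp_apply, LinearMap.comp_apply]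
  by_cases h : StrictAnti c.1
  · obtain ⟨d, rfl⟩ := exists_toMChain_eq h
    rw [piProj_single_toMChain, cbdry_single, mbdry_single, map_sum]
    exact Finset.sum_congr rfl fun k _ => by
      rw [map_smul, ← piProj_single_toMChain]
      rfl
  · rw [piProj_single_of_not_strictAnti h, map_zero, piProj_mbdry_single_of_not_strictAnti h]

end Multichains

section SymmetrizedJoins
variable {K} {L : Type} [SemilatticeSup L]

lemma decomposeFin_symm_zero_comp_succ {n : ℕ} (σ : Equiv.Perm (Fin n)) :
    Equiv.Perm.decomposeFin.symm (0, σ) ∘ Fin.succ = (0 : Fin (n + 1)).succAbove ∘ σ := by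
  ext x
  simp

lemma decomposeFin_symm_succ_comp_succ {n : ℕ} (i : Fin n) (σ : Equiv.Perm (Fin n)) :
    Equiv.Perm.decomposeFin.symm (i.succ, i.cycleRange⁻¹ * σ) ∘ Fin.succ =
      i.succ.succAbove ∘ σ := by
  ext x
  have h := Fin.succAbove_cycleRange i (i.cycleRange⁻¹ (σ x))
  rw [← Equiv.Perm.mul_apply, mul_inv_cancel, Equiv.Perm.one_apply] at h
  simp [h]

lemma sum_perm_sign_smul_comp_succ {M : Type*} [AddCommGroup M] [Module K M] {n : ℕ}
    (F : (Fin n → Fin (n + 1)) → M) :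
    ∑ σ : Equiv.Perm (Fin (n + 1)), ((Equiv.Perm.sign σ : ℤ) : K) • F (σ ∘ Fin.succ) =
      ∑ k : Fin (n + 1), (-1 : K) ^ (k : ℕ) •
        ∑ σ : Equiv.Perm (Fin n), ((Equiv.Perm.sign σ : ℤ) : K) • F (k.succAbove ∘ σ) := by
  rw [← Equiv.Perm.decomposeFin.symm.sum_comp, Fintype.sum_prod_type]
  refine Finset.sum_congr rfl fun k _ => ?_
  rw [Finset.smul_sum]
  cases k using Fin.cases with
  | zero =>
    refine Finset.sum_congr rfl fun σ _ => ?_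
    rw [decomposeFin_symm_zero_comp_succ]
    simp
  | succ i =>
    rw [← Equiv.sum_comp (Equiv.mulLeft i.cycleRange⁻¹)]
    refine Finset.sum_congr rfl fun σ _ => ?_
    rw [Equiv.coe_mulLeft, decomposeFin_symm_succ_comp_succ, smul_smul]
    simp [pow_succ]

/-- The symmetrization `∑ σ, sgn(σ) τ(a_σ)` of a tuple `a`, the sum being over all
permutations. -/
def symJoin {n : ℕ} (a : Fin n → L) : MGrp K L n :=
  ∑ σ : Equiv.Perm (Fin n), ((Equiv.Perm.sign σ : ℤ) : K) • single (tauMul L (a ∘ σ)) 1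

lemma sum_sign_smul_mdel_succ_tauMul {n : ℕ} (a : Fin (n + 1) → L) (j : Fin n) :
    ∑ σ : Equiv.Perm (Fin (n + 1)), ((Equiv.Perm.sign σ : ℤ) : K) •
      (single (mdel L j.succ (tauMul L (a ∘ σ))) 1 : MGrp K L n) = 0 := by
  have hne : j.castSucc ≠ j.succ := Fin.castSucc_lt_succ.ne
  refine Finset.sum_involution (fun σ _ => σ * Equiv.swap j.castSucc j.succ)
    (fun σ _ => ?_) (fun σ _ _ h => hne (Equiv.swap_eq_one_iff.mp (mul_eq_left.mp h)))
    (fun _ _ => Finset.mem_univ _) (fun σ _ => ?_)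
  · rw [Equiv.Perm.coe_mul, ← Function.comp_assoc, mdel_succ_tauMul_comp_swap]
    simp [Equiv.Perm.sign_swap hne]
  · rw [mul_assoc, Equiv.swap_mul_self, mul_one]

lemma mbdry_symJoin {n : ℕ} (a : Fin (n + 1) → L) :
    mbdry K L n (symJoin a) =
      ∑ k : Fin (n + 1), (-1 : K) ^ (k : ℕ) • symJoin (a ∘ k.succAbove) := by
  have hexpand : mbdry K L n (symJoin a) = ∑ k : Fin (n + 1), (-1 : K) ^ (k : ℕ) •
      ∑ σ : Equiv.Perm (Fin (n + 1)), ((Equiv.Perm.sign σ : ℤ) : K) •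
        single (mdel L k (tauMul L (a ∘ σ))) 1 := by
    simp only [symJoin, map_sum, map_smul, mbdry_single, Finset.smul_sum]
    rw [Finset.sum_comm]
    exact Finset.sum_congr rfl fun k _ => Finset.sum_congr rfl fun σ _ => smul_comm _ _ _
  rw [hexpand, Fin.sum_univ_succ]
  simp only [sum_sign_smul_mdel_succ_tauMul, smul_zero, Finset.sum_const_zero, add_zero]
  simpa [symJoin, mdel_zero_tauMul, Function.comp_assoc] using
    sum_perm_sign_smul_comp_succ (K := K) fun f => (single (tauMul L (a ∘ f)) 1 : MGrp K L n)

/-- The projection to order chains of the symmetrization of a tuple. -/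
def symChain {n : ℕ} (a : Fin n → L) : CGrp K L n := piProj K L n (symJoin a)

lemma symChain_eq_sum {n : ℕ} (a : Fin n → L) :
    symChain a = ∑ σ : Equiv.Perm (Fin n), ((Equiv.Perm.sign σ : ℤ) : K) •
      piProj K L n (single (tauMul L (a ∘ σ)) 1) := by
  simp only [symChain, symJoin, map_sum, map_smul]

lemma cbdry_symChain {n : ℕ} (a : Fin (n + 1) → L) :
    cbdry K L n (symChain a) =
      ∑ k : Fin (n + 1), (-1 : K) ^ (k : ℕ) • symChain (a ∘ k.succAbove) := by
  simp only [symChain, cbdry_piProj, mbdry_symJoin, map_sum, map_smul]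

lemma symChain_coe {n : ℕ} (c : OChain L n) : symChain c.1 = (single c 1 : CGrp K L n) := by
  rw [symChain_eq_sum, Fintype.sum_eq_single (1 : Equiv.Perm (Fin n))]
  · rw [Equiv.Perm.coe_one, Function.comp_id, tauMul_coe, piProj_single_toMChain,
      Equiv.Perm.sign_one, Units.val_one, Int.cast_one, one_smul]
  · intro σ hσ
    obtain ⟨p, q, hpq, hlt⟩ : ∃ p q, p < q ∧ σ q < σ p := by
      by_contra! h
      exact hσ (σ.monotone_iff.mp (monotone_iff_forall_lt.mpr h))
    rw [piProj_single_of_not_strictAnti (not_strictAnti_tauMul hpq (c.2 hlt).le), smul_zero]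

lemma symChain_mem_chainsIn {n : ℕ} {a : Fin n → L} {J : Set L} (hJ : SupClosed J)
    (ha : ∀ r, a r ∈ J) : (symChain a : CGrp K L n) ∈ chainsIn K L J n := by
  rw [symChain_eq_sum]
  exact Submodule.sum_mem _ fun σ _ => Submodule.smul_mem _ _ <|
    piProj_single_mem_chainsIn fun r => hJ.finsetSup'_mem Finset.nonempty_Ici fun s _ => ha (σ s)

end SymmetrizedJoins

section ProjectedShuffles
variable {K} {L : Type} [SemilatticeSup L]

/-- The bilinear map `(u, v) ↦ π(u ⧢ v)` on order chains. -/
def projShuffle {a b n : ℕ} (h : a + b = n) : CGrp K L a →ₗ[K] CGrp K L b →ₗ[K] CGrp K L n :=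
  ((shufLin K L a b).compl₁₂ (iotaCM K L a) (iotaCM K L b)).compr₂
    ((piProj K L n).comp (castMGrp K L h).toLinearMap)

lemma castMGrp_rfl {n : ℕ} (f : MGrp K L n) : castMGrp K L rfl f = f := by
  ext c
  simp [castMGrp]

lemma castCGrp_rfl {P : Type} [Preorder P] {n : ℕ} (f : CGrp K P n) : castCGrp K P rfl f = f := by
  ext c
  simp [castCGrp]

lemma shufLin_single_single {p q : ℕ} (c : MChain L p) (c' : MChain L q) :
    shufLin K L p q (single c 1) (single c' 1) = shufPair K L c c' := by
  simp [shufLin]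

lemma concatT_of_lt {X : Type} {a b n : ℕ} (h : a + b = n) (u : Fin a → X) (v : Fin b → X)
    {r : Fin n} (hr : (r : ℕ) < a) : concatT X h u v r = u ⟨r, hr⟩ :=
  dif_pos hr

lemma concatT_of_le {X : Type} {a b n : ℕ} (h : a + b = n) (u : Fin a → X) (v : Fin b → X)
    {r : Fin n} (hr : a ≤ r) : concatT X h u v r = v ⟨r - a, by omega⟩ :=
  dif_neg hr.not_gt

lemma not_strictAnti_tauMul_concatT {p q : ℕ} (c : MChain L p) (c' : MChain L q)
    {σ : Equiv.Perm (Fin (p + q))} (hσ : ¬ IsShuffleBlocks p σ) :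
    ¬ StrictAnti (tauMul L (concatT L rfl c.1 c'.1 ∘ σ)).1 := by
  simp only [IsShuffleBlocks, not_and_or, not_forall, not_lt, exists_prop] at hσ
  obtain ⟨r, s, hrs, hr, hs, hle⟩ | ⟨r, s, hrs, hr, hs, hle⟩ := hσ
  · refine not_strictAnti_tauMul hrs ?_
    rw [Function.comp_apply, Function.comp_apply, concatT_of_lt _ _ _ hr, concatT_of_lt _ _ _ hs]
    exact c.2 hle
  · refine not_strictAnti_tauMul hrs ?_
    rw [Function.comp_apply, Function.comp_apply, concatT_of_le _ _ _ hr, concatT_of_le _ _ _ hs]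
    exact c'.2 (Nat.sub_le_sub_right hle p)

lemma piProj_shufPair {p q : ℕ} (c : MChain L p) (c' : MChain L q) :
    piProj K L (p + q) (shufPair K L c c') = symChain (concatT L rfl c.1 c'.1) := by
  rw [shufPair, symChain_eq_sum, map_sum]
  refine Finset.sum_congr rfl fun σ _ => ?_
  split_ifs with hσ
  · rw [map_smul]
  · rw [map_zero, piProj_single_of_not_strictAnti (not_strictAnti_tauMul_concatT c c' hσ),
      smul_zero]

lemma projShuffle_single_single {a b n : ℕ} (h : a + b = n) (c : OChain L a) (c' : OChain L b) :
    projShuffle h (single c 1) (single c' 1) = (symChain (concatT L h c.1 c'.1) : CGrp K L n) := by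
  subst h
  change piProj K L _ (castMGrp K L rfl (shufLin K L a b (iotaCM K L a (single c 1))
    (iotaCM K L b (single c' 1)))) = _
  rw [castMGrp_rfl, iotaCM_single, iotaCM_single, shufLin_single_single, piProj_shufPair]
  rfl

/-- The concatenation of two order chains, with its length prescribed up to equality. -/
def OChain.append {P : Type} [PartialOrder P] {a b n : ℕ} (h : a + b = n) (χ : OChain P a)
    (c : OChain P b) (hlt : ∀ s r, c.1 s < χ.1 r) : OChain P n :=
  ⟨concatT P h χ.1 c.1, by subst h; exact (concatOC P χ c hlt).2⟩

lemma projShuffle_single_single_of_lt {a b n : ℕ} (h : a + b = n) {χ : OChain L a}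
    {c : OChain L b} (hlt : ∀ s r, c.1 s < χ.1 r) :
    projShuffle h (single χ 1) (single c 1) = (single (χ.append h c hlt) 1 : CGrp K L n) :=
  (projShuffle_single_single h χ c).trans (symChain_coe (χ.append h c hlt))

lemma castCGrp_prependC {a b n : ℕ} (h : a + b = n) (χ : OChain L a) {ζ : CGrp K L b}
    (hζ : ζ ∈ supported K K {c : OChain L b | ∀ s r, c.1 s < χ.1 r}) :
    castCGrp K L h (prependC K L χ ζ) = projShuffle h (single χ 1) ζ := by
  subst h
  rw [castCGrp_rfl]
  refine eqOn_supported (fun c hc => ?_) hζ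
  have hlt : ∀ s r, c.1 s < χ.1 r := hc
  rw [projShuffle_single_single_of_lt rfl hlt]
  simp only [prependC, lsum_single]
  rw [dif_pos hlt]
  rfl

lemma projShuffle_mem_chainsIn {a b n : ℕ} (h : a + b = n) {J : Set L} (hJ : SupClosed J)
    {u : CGrp K L a} {v : CGrp K L b} (hu : u ∈ chainsIn K L J a) (hv : v ∈ chainsIn K L J b) :
    projShuffle h u v ∈ chainsIn K L J n := by
  suffices hle : chainsIn K L J a ≤ (chainsIn K L J n).comap ((projShuffle h).flip v) from hle hu
  refine supported_le_iff.mpr fun c hc => ?_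
  suffices hle : chainsIn K L J b ≤ (chainsIn K L J n).comap (projShuffle h (single c 1)) from
    hle hv
  refine supported_le_iff.mpr fun c' hc' => ?_
  rw [Submodule.mem_comap, projShuffle_single_single]
  refine symChain_mem_chainsIn hJ fun r => ?_
  unfold concatT
  split_ifs
  exacts [hc _, hc' _]

lemma sum_fin_eq_sum_add_sum {M : Type*} [AddCommMonoid M] {a b n : ℕ} (h : a + b = n)
    (f : Fin n → M) :
    ∑ k, f k = ∑ i : Fin a, f ⟨i, by omega⟩ + ∑ j : Fin b, f ⟨a + j, by omega⟩ := by
  subst h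
  exact Fin.sum_univ_add f

lemma concatT_comp_succAbove_left {X : Type} {p q n : ℕ} (h : p + 1 + q = n + 1)
    (h' : p + q = n) (u : Fin (p + 1) → X) (v : Fin q → X) (i : Fin (p + 1)) :
    concatT X h u v ∘ Fin.succAbove ⟨i, by omega⟩ = concatT X h' (u ∘ i.succAbove) v := by
  funext r
  simp only [concatT, Fin.succAbove, Function.comp_apply, Fin.lt_def]
  grind

lemma concatT_comp_succAbove_right {X : Type} {p q n : ℕ} (h : p + (q + 1) = n + 1)
    (h' : p + q = n) (u : Fin p → X) (v : Fin (q + 1) → X) (j : Fin (q + 1)) :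
    concatT X h u v ∘ Fin.succAbove ⟨p + j, by omega⟩ = concatT X h' u (v ∘ j.succAbove) := by
  funext r
  simp only [concatT, Fin.succAbove, Function.comp_apply, Fin.lt_def]
  grind

lemma cbdry_projShuffle_single_single {p q n : ℕ} (h : p + 1 + q = n + 1) (h' : p + q = n)
    (c : OChain L (p + 1)) (c' : OChain L q) :
    cbdry K L n (projShuffle h (single c 1) (single c' 1)) =
      projShuffle h' (cbdry K L p (single c 1)) (single c' 1) +
        ∑ j : Fin q, (-1 : K) ^ (p + 1 + j : ℕ) •
          symChain (concatT L h c.1 c'.1 ∘ Fin.succAbove ⟨p + 1 + j, by omega⟩) := by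
  rw [projShuffle_single_single, cbdry_symChain, sum_fin_eq_sum_add_sum h, cbdry_single]
  simp only [concatT_comp_succAbove_left h h', map_sum, map_smul, LinearMap.sum_apply,
    LinearMap.smul_apply, projShuffle_single_single]
  rfl

lemma cbdry_projShuffle_zero {p n : ℕ} (h : p + 1 + 0 = n + 1) (h' : p + 0 = n)
    (u : CGrp K L (p + 1)) (v : CGrp K L 0) :
    cbdry K L n (projShuffle h u v) = projShuffle h' (cbdry K L p u) v := by
  suffices hlin : (projShuffle h).compr₂ (cbdry K L n) =
      (projShuffle (L := L) h').comp (cbdry K L p) from LinearMap.congr_fun₂ hlin u v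
  refine linearMap_ext_single_one fun c => linearMap_ext_single_one fun c' => ?_
  simpa using cbdry_projShuffle_single_single h h' c c'

lemma cbdry_projShuffle_succ {p q n : ℕ} (h : p + 1 + (q + 1) = n + 1) (h₁ : p + (q + 1) = n)
    (h₂ : p + 1 + q = n) (u : CGrp K L (p + 1)) (v : CGrp K L (q + 1)) :
    cbdry K L n (projShuffle h u v) =
      projShuffle h₁ (cbdry K L p u) v + (-1 : K) ^ (p + 1) • projShuffle h₂ u (cbdry K L q v) := by
  suffices hlin : (projShuffle h).compr₂ (cbdry K L n) =
      (projShuffle (L := L) h₁).comp (cbdry K L p) +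
        (-1 : K) ^ (p + 1) • (projShuffle h₂).compl₂ (cbdry K L q) from
    LinearMap.congr_fun₂ hlin u v
  refine linearMap_ext_single_one fun c => linearMap_ext_single_one fun c' => ?_
  refine (cbdry_projShuffle_single_single h h₁ c c').trans (congrArg _ ?_)
  simp only [LinearMap.smul_apply, LinearMap.compl₂_apply, cbdry_single, map_sum, map_smul,
    projShuffle_single_single, Finset.smul_sum, smul_smul, ← pow_add,
    concatT_comp_succAbove_right h h₂]
  rfl

lemma cbdry_projShuffle_of_mem_cyclesAt {p q n : ℕ} (h : p + 1 + q = n + 1) (h' : p + q = n)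
    (u : CGrp K L (p + 1)) {v : CGrp K L q} (hv : v ∈ cyclesAt K L q) :
    cbdry K L n (projShuffle h u v) = projShuffle h' (cbdry K L p u) v := by
  cases q with
  | zero => exact cbdry_projShuffle_zero h h' u v
  | succ q =>
    rw [cbdry_projShuffle_succ h h' (by omega), show cbdry K L q v = 0 from hv, map_zero,
      smul_zero, add_zero]

end ProjectedShuffles

section Homotopy
variable {K} {L : Type} [SemilatticeSup L]

lemma projShuffle_single_empty {n : ℕ} (e : OChain L 0) (f : CGrp K L n) :
    projShuffle (zero_add n) (single e 1) f = f := by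
  suffices hlin : projShuffle (zero_add n) (single e (1 : K)) = LinearMap.id from
    LinearMap.congr_fun hlin f
  refine linearMap_ext_single_one fun c => ?_
  have happend : e.append (zero_add n) c (fun _ r => r.elim0) = c :=
    Subtype.ext (funext fun r => concatT_of_le (zero_add n) e.1 c.1 (Nat.zero_le r))
  rw [projShuffle_single_single_of_lt (zero_add n) fun _ r => r.elim0, happend,
    LinearMap.id_apply]

/-- The cone with apex `x`: the projected shuffle product with the chain `(x)`. -/
def cone (x : L) {n : ℕ} : CGrp K L n →ₗ[K] CGrp K L (n + 1) :=
  projShuffle (add_comm 1 n) (single (OChain.point x) 1)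

lemma cbdry_cone (x : L) {n : ℕ} {f : CGrp K L n} (hf : f ∈ cyclesAt K L n) :
    cbdry K L n (cone x f) = f := by
  rw [cone, cbdry_projShuffle_of_mem_cyclesAt (p := 0) _ (zero_add n) _ hf, cbdry_single]
  simp [projShuffle_single_empty]

/-- A linear map between chain groups is carried if it maps the chains of every join-closed lower
set to chains of that lower set. In positive levels this is property (R2) with `L_{≤ x₀}` in
place of the synor complex over it; at level `0` taking the empty lower set shows that the image
consists of multiples of the empty chain. -/
def IsCarried {a b : ℕ} (D : CGrp K L a →ₗ[K] CGrp K L b) : Prop :=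
  ∀ ⦃J : Set L⦄, IsLowerSet J → SupClosed J → ∀ u ∈ chainsIn K L J a, D u ∈ chainsIn K L J b

lemma isCarried_of_forall_mem_chainsIn_Iic {a b : ℕ} {D : CGrp K L (a + 1) →ₗ[K] CGrp K L b}
    (hD : ∀ c : OChain L (a + 1), D (single c 1) ∈ chainsIn K L (Set.Iic (c.1 0)) b) :
    IsCarried D := fun J hJ _ => by
  suffices hle : chainsIn K L J (a + 1) ≤ (chainsIn K L J b).comap D from hle
  exact supported_le_iff.mpr fun c hc => chainsIn_mono (hJ.Iic_subset (hc 0)) b (hD c)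

lemma single_mem_chainsIn_Iic {n : ℕ} (c : OChain L (n + 1)) :
    single c 1 ∈ chainsIn K L (Set.Iic (c.1 0)) (n + 1) :=
  single_mem_supported K _ fun r => c.2.antitone (Fin.zero_le r)

variable (ρ : (n : ℕ) → CGrp K L n →ₗ[K] CGrp K L n)

/-- The chain homotopy from a chain map `ρ` with (R0)–(R2) to the identity, obtained inductively
by coning off with apex the largest element of each order chain. -/
def coneHomotopy : (n : ℕ) → CGrp K L n →ₗ[K] CGrp K L (n + 1)
  | 0 => 0
  | n + 1 => linearCombination K fun c => cone (c.1 0) <|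
      single c 1 - ρ (n + 1) (single c 1) - coneHomotopy n (cbdry K L n (single c 1))

variable {ρ}

lemma coneHomotopy_single {n : ℕ} (c : OChain L (n + 1)) :
    coneHomotopy ρ (n + 1) (single c 1) = cone (c.1 0)
      (single c 1 - ρ (n + 1) (single c 1) - coneHomotopy ρ n (cbdry K L n (single c 1))) := by
  rw [coneHomotopy, linearCombination_single, one_smul]

lemma isCarried_coneHomotopy
    (hρ2 : ∀ (n : ℕ) (c : OChain L (n + 1)),
      ρ (n + 1) (single c 1) ∈ chainsIn K L (Set.Iic (c.1 0)) (n + 1))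
    (n : ℕ) : IsCarried (coneHomotopy ρ n) := by
  induction n with
  | zero => exact fun J _ _ u _ => Submodule.zero_mem _
  | succ n ih =>
    refine isCarried_of_forall_mem_chainsIn_Iic fun c => ?_
    have hsup : SupClosed (Set.Iic (c.1 0)) := fun _ hx _ hy => sup_le hx hy
    have hcbdry := cbdry_mem_chainsIn (single_mem_chainsIn_Iic (K := K) c)
    rw [coneHomotopy_single]
    exact projShuffle_mem_chainsIn _ hsup (single_mem_supported K _ fun _ => le_rfl) <|
      Submodule.sub_mem _ (Submodule.sub_mem _ (single_mem_chainsIn_Iic c) (hρ2 n c))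
        (ih (isLowerSet_Iic _) hsup _ hcbdry)

lemma cbdry_coneHomotopy (hρ0 : ρ 0 = LinearMap.id)
    (hρ1 : ∀ n, (ρ n).comp (cbdry K L n) = (cbdry K L n).comp (ρ (n + 1)))
    (n : ℕ) (u : CGrp K L (n + 1)) :
    cbdry K L (n + 1) (coneHomotopy ρ (n + 1) u) + coneHomotopy ρ n (cbdry K L n u) =
      u - ρ (n + 1) u := by
  have hcomm (k : ℕ) (v : CGrp K L (k + 1)) : ρ k (cbdry K L k v) = cbdry K L k (ρ (k + 1) v) :=
    LinearMap.congr_fun (hρ1 k) v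
  have hcycle (v : CGrp K L (n + 1)) :
      v - ρ (n + 1) v - coneHomotopy ρ n (cbdry K L n v) ∈ cyclesAt K L (n + 1) := by
    change cbdry K L n _ = 0
    cases n with
    | zero => simp [coneHomotopy, ← hcomm, hρ0]
    | succ n =>
      have hH := cbdry_coneHomotopy hρ0 hρ1 n (cbdry K L (n + 1) v)
      have hcbdry : cbdry K L n (cbdry K L (n + 1) v) = 0 :=
        LinearMap.congr_fun (cbdry_comp_cbdry n) v
      rw [hcbdry, map_zero, add_zero] at hH
      rw [map_sub, map_sub, hH, ← hcomm, sub_self]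
  suffices hlin : (cbdry K L (n + 1)).comp (coneHomotopy ρ (n + 1)) +
      (coneHomotopy ρ n).comp (cbdry K L n) = LinearMap.id - ρ (n + 1) from
    LinearMap.congr_fun hlin u
  refine linearMap_ext_single_one fun c => ?_
  change cbdry K L (n + 1) (coneHomotopy ρ (n + 1) (single c 1)) + _ = _
  rw [coneHomotopy_single, cbdry_cone _ (hcycle _)]
  exact sub_add_cancel _ _

end Homotopy

section Comparison
variable {K} {L : Type} [SemilatticeSup L]

lemma supClosed_lowerClosure {s : Set L} (hs : DirectedOn (· ≤ ·) s) :
    SupClosed (lowerClosure s : Set L) := by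
  rintro x ⟨a, ha, hxa⟩ y ⟨b, hb, hyb⟩
  obtain ⟨z, hz, haz, hbz⟩ := hs a ha b hb
  exact ⟨z, hz, sup_le (hxa.trans haz) (hyb.trans hbz)⟩

/-- The map replacing the initial segment `c.take` of every order chain `c` by its image under
`D` and multiplying the result with the remaining final segment. -/
def applyPrefix {a a' b n n' : ℕ} (h : a + b = n) (h' : a' + b = n')
    (D : CGrp K L a →ₗ[K] CGrp K L a') : CGrp K L n →ₗ[K] CGrp K L n' :=
  linearCombination K fun c =>
    projShuffle h' (D (single (c.take h) 1)) (single (c.drop h) 1)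

lemma OChain.take_append {P : Type} [PartialOrder P] {a b n : ℕ} (h : a + b = n) (χ : OChain P a)
    (c : OChain P b) (hlt : ∀ s r, c.1 s < χ.1 r) : (χ.append h c hlt).take h = χ :=
  Subtype.ext <| funext fun i => dif_pos i.2

lemma OChain.drop_append {P : Type} [PartialOrder P] {a b n : ℕ} (h : a + b = n) (χ : OChain P a)
    (c : OChain P b) (hlt : ∀ s r, c.1 s < χ.1 r) : (χ.append h c hlt).drop h = c :=
  Subtype.ext <| funext fun j => (dif_neg (Nat.not_lt.mpr (Nat.le_add_right a j))).trans <|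
    congrArg c.1 (Fin.ext (Nat.add_sub_cancel_left a j))

lemma applyPrefix_projShuffle_single {a a' b n n' : ℕ} (h : a + b = n) (h' : a' + b = n')
    (D : CGrp K L a →ₗ[K] CGrp K L a') (χ : OChain L a) {ζ : CGrp K L b}
    (hζ : ζ ∈ supported K K {c : OChain L b | ∀ s r, c.1 s < χ.1 r}) :
    applyPrefix h h' D (projShuffle h (single χ 1) ζ) = projShuffle h' (D (single χ 1)) ζ := by
  refine eqOn_supported (f := (applyPrefix h h' D).comp (projShuffle h (single χ 1)))
    (fun c hc => ?_) hζ
  rw [LinearMap.comp_apply, projShuffle_single_single_of_lt h hc, applyPrefix,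
    linearCombination_single, one_smul, OChain.take_append, OChain.drop_append]

lemma applyPrefix_mem_chainsIn {a a' b n n' : ℕ} (h : a + b = n) (h' : a' + b = n')
    {D : CGrp K L a →ₗ[K] CGrp K L a'} (hD : IsCarried D) {J : Set L} (hJ : IsLowerSet J)
    {u : CGrp K L n} (hu : u ∈ chainsIn K L J n) :
    applyPrefix h h' D u ∈ chainsIn K L J n' := by
  suffices hle : chainsIn K L J n ≤ (chainsIn K L J n').comap (applyPrefix h h' D) from hle hu
  refine supported_le_iff.mpr fun c hc => ?_
  have hsup : SupClosed (lowerClosure (Set.range c.1) : Set L) :=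
    supClosed_lowerClosure (directedOn_range.mpr c.2.antitone.directed_le)
  have hmem (r : Fin n) : c.1 r ∈ lowerClosure (Set.range c.1) :=
    subset_lowerClosure (Set.mem_range_self r)
  have hJc : (lowerClosure (Set.range c.1) : Set L) ⊆ J :=
    lowerClosure_min (Set.range_subset_iff.mpr hc) hJ
  rw [Submodule.mem_comap, applyPrefix, linearCombination_single, one_smul]
  exact chainsIn_mono hJc n' <| projShuffle_mem_chainsIn h' hsup
    (hD (lowerClosure _).lower hsup _ <| single_mem_supported K _ fun r => hmem _)
    (single_mem_supported K _ fun r => hmem _)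

lemma projShuffle_single_sub_projShuffle {ρ : (n : ℕ) → CGrp K L n →ₗ[K] CGrp K L n}
    (hρ0 : ρ 0 = LinearMap.id)
    (hρ1 : ∀ n, (ρ n).comp (cbdry K L n) = (cbdry K L n).comp (ρ (n + 1)))
    {p q n : ℕ} (h : p + 1 + q = n + 1) (h₁ : p + q = n) (h₂ : p + 2 + q = n + 2)
    (χ : OChain L (p + 1)) {ζ : CGrp K L q} (hcyc : ζ ∈ cyclesAt K L q)
    (hlt : ζ ∈ supported K K {c : OChain L q | ∀ s r, c.1 s < χ.1 r}) :
    projShuffle h (single χ 1) ζ - projShuffle h (ρ (p + 1) (single χ 1)) ζ =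
      cbdry K L (n + 1) (projShuffle h₂ (coneHomotopy ρ (p + 1) (single χ 1)) ζ) +
        applyPrefix h₁ h (coneHomotopy ρ p) (cbdry K L n (projShuffle h (single χ 1) ζ)) := by
  have hprefix : applyPrefix h₁ h (coneHomotopy ρ p) (projShuffle h₁ (cbdry K L p (single χ 1)) ζ) =
      projShuffle h (coneHomotopy ρ p (cbdry K L p (single χ 1))) ζ := by
    simp only [cbdry_single, map_sum, map_smul, LinearMap.sum_apply, LinearMap.smul_apply]
    refine Finset.sum_congr rfl fun k _ => congrArg _ (applyPrefix_projShuffle_single h₁ h _ _ ?_)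
    refine supported_mono ?_ hlt
    exact fun c hc s r => hc s (k.succAbove r)
  rw [← LinearMap.map_sub₂, ← cbdry_coneHomotopy hρ0 hρ1, map_add, LinearMap.add_apply,
    cbdry_projShuffle_of_mem_cyclesAt h₂ h _ hcyc, cbdry_projShuffle_of_mem_cyclesAt h h₁ _ hcyc,
    hprefix]

lemma finite_initSegs {P : Type} [PartialOrder P] {m : ℕ} (γ : CGrp K P (m + 1)) {s : ℕ}
    (h : s ≤ m + 1) : (initSegs K P γ s h).Finite := by
  refine (γ.support.finite_toSet.image (OChain.take (Nat.add_sub_of_le h))).subset ?_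
  rintro χ ⟨c, hc, hχ⟩
  exact ⟨c, hc, Subtype.ext (funext hχ)⟩

end Comparison

theorem representation_shuffled_relative_homologous_general {L : Type} [SemilatticeSup L]
    {ρ : (n : ℕ) → CGrp K L n →ₗ[K] CGrp K L n} (hρ0 : ρ 0 = LinearMap.id)
    (hρ1 : ∀ n, (ρ n).comp (cbdry K L n) = (cbdry K L n).comp (ρ (n + 1)))
    (hρ2 : ∀ (n : ℕ) (c : OChain L (n + 1)),
      ρ (n + 1) (single c 1) ∈ chainsIn K L (Set.Iic (c.1 0)) (n + 1))
    {J : Set L} (hJ : IsLowerSet J) {p q n : ℕ} (h : p + 1 + q = n + 1)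
    {γ : CGrp K L (n + 1)} (hγ : cbdry K L n γ ∈ chainsIn K L J n)
    {X : Set (OChain L (p + 1))} (hX : X.Finite) {ζ : OChain L (p + 1) → CGrp K L q}
    (hcyc : ∀ χ ∈ X, ζ χ ∈ cyclesAt K L q)
    (hlt : ∀ χ ∈ X, ζ χ ∈ supported K K {c : OChain L q | ∀ s r, c.1 s < χ.1 r})
    (hrepr : γ = ∑ᶠ χ ∈ X, castCGrp K L h (prependC K L χ (ζ χ))) :
    γ - ∑ᶠ χ ∈ X, piProj K L (n + 1) (castMGrp K L h (shufLin K L (p + 1) q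
        (iotaCM K L (p + 1) (ρ (p + 1) (single χ 1))) (iotaCM K L q (ζ χ)))) ∈
      boundariesIn K L (n + 1) ⊔ chainsIn K L J (n + 1) := by
  change γ - ∑ᶠ χ ∈ X, projShuffle h (ρ (p + 1) (single χ 1)) (ζ χ) ∈ _
  have h₁ : p + q = n := by omega
  have h₂ : p + 2 + q = n + 2 := by omega
  have hγsum : γ = ∑ᶠ χ ∈ X, projShuffle h (single χ 1) (ζ χ) :=
    hrepr.trans <| finsum_mem_congr rfl fun χ hχ => castCGrp_prependC h χ (hlt χ hχ)
  have hdiff : γ - ∑ᶠ χ ∈ X, projShuffle h (ρ (p + 1) (single χ 1)) (ζ χ) =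
      cbdry K L (n + 1) (∑ᶠ χ ∈ X, projShuffle h₂ (coneHomotopy ρ (p + 1) (single χ 1)) (ζ χ)) +
        applyPrefix h₁ h (coneHomotopy ρ p) (cbdry K L n γ) := by
    rw [hγsum]
    simp only [finsum_mem_eq_finite_toFinset_sum _ hX, map_sum, ← Finset.sum_sub_distrib,
      ← Finset.sum_add_distrib]
    exact Finset.sum_congr rfl fun χ hχ =>
      have hχ := hX.mem_toFinset.mp hχ
      projShuffle_single_sub_projShuffle hρ0 hρ1 h h₁ h₂ χ (hcyc χ hχ) (hlt χ hχ)
  rw [hdiff]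
  exact Submodule.add_mem_sup (LinearMap.mem_range_self _ _) <|
    applyPrefix_mem_chainsIn h₁ h (isCarried_coneHomotopy hρ2 p) hJ hγ

/-- Let `L` be a finite lattice with `0̂ ≠ 1̂`, `L̄ = L ∖ {0̂}`,
`Ľ = L ∖ {0̂, 1̂}`.  Fix a synor complex `S_*(L̄) ⊆ C̃_*(L̄)` and maps `ρ_k` satisfying
(R0)–(R2).  Let `γ = 1̂ * ζ ∈ S_m(L̄)^{(1̂)}` be a principal synor chain, `1 ≤ ℓ ≤ m`, and
let `γ = Σ_{χ ∈ X_ℓ^γ} χ * ζ_χ` be its `ℓ`-representation.  Then `γ` is homologous to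
`Σ_{χ ∈ X_ℓ^γ} π(ρ_ℓ(χ) ⧢ ζ_χ)` in the relative homology `H̃_m(L̄, Ľ)`, i.e. their
difference is a boundary plus a chain supported in `Ľ`. -/
theorem representation_shuffled_relative_homologous
    (L : Type) [Lattice L] [BoundedOrder L] [Fintype L] (hbt : (⊥ : L) ≠ ⊤)
    (σ : SynorComplex K (Punct L))
    (ρ : (nn : ℕ) → CGrp K (Punct L) nn →ₗ[K] CGrp K (Punct L) nn)
    (hρ0 : ρ 0 = LinearMap.id)
    (hρS : ∀ (nn : ℕ) (f : CGrp K (Punct L) nn),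
      ρ nn f ∈ idealPart K (Punct L) σ.S Set.univ nn)
    (hρ1 : ∀ nn : ℕ,
      (ρ nn).comp (cbdry K (Punct L) nn) = (cbdry K (Punct L) nn).comp (ρ (nn + 1)))
    (hρ2 : ∀ (nn : ℕ) (c : OChain (Punct L) (nn + 1)),
      ρ (nn + 1) (Finsupp.single c 1) ∈ ⨆ y ∈ Set.Iic (c.1 0), σ.S nn y)
    (m ℓ : ℕ) (h1 : 1 ≤ ℓ) (h2 : ℓ ≤ m)
    (γ : CGrp K (Punct L) (m + 1))
    (hγ : γ ∈ σ.S m ⟨(⊤ : L), fun h => hbt h.symm⟩)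
    -- the ℓ-representation of γ
    (ζA : OChain (Punct L) (ℓ + 1) → CGrp K (Punct L) (m - ℓ))
    (hA0 : ∀ χ : OChain (Punct L) (ℓ + 1),
      ζA χ ∈ cyclesAt K (Punct L) (m - ℓ) ⊓
        idealPart K (Punct L) σ.S (Set.Iio (χ.1 (Fin.last ℓ))) (m - ℓ))
    (hA1 : ∀ χ : OChain (Punct L) (ℓ + 1), ζA χ ∈ Finsupp.supported K K
      {c : OChain (Punct L) (m - ℓ) |
        ∀ (s : Fin (m - ℓ)) (r : Fin (ℓ + 1)), c.1 s < χ.1 r})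
    (hA2 : ∀ χ ∉ initSegs K (Punct L) γ (ℓ + 1) (by omega), ζA χ = 0)
    (hA3 : γ = ∑ᶠ χ ∈ initSegs K (Punct L) γ (ℓ + 1) (by omega),
      castCGrp K (Punct L) (by omega) (prependC K (Punct L) χ (ζA χ))) :
    γ - (∑ᶠ χ ∈ initSegs K (Punct L) γ (ℓ + 1) (by omega),
        piProj K (Punct L) (m + 1)
          (castMGrp K (Punct L) (show (ℓ + 1) + (m - ℓ) = m + 1 by omega)
            (shufLin K (Punct L) (ℓ + 1) (m - ℓ)
              (iotaCM K (Punct L) (ℓ + 1) (ρ (ℓ + 1) (Finsupp.single χ 1)))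
              (iotaCM K (Punct L) (m - ℓ) (ζA χ))))) ∈
      boundariesIn K (Punct L) (m + 1) ⊔
        chainsIn K (Punct L) {y : Punct L | (y : L) ≠ ⊤} (m + 1) := by
  have htop : IsLowerSet {y : Punct L | (y : L) ≠ ⊤} := fun y z hzy hy hz =>
    hy (top_le_iff.mp (hz ▸ hzy))
  have hρ2' (nn : ℕ) (c : OChain (Punct L) (nn + 1)) :
      ρ (nn + 1) (single c 1) ∈ chainsIn K (Punct L) (Set.Iic (c.1 0)) (nn + 1) :=
    σ.iSup_le_chainsIn nn (isLowerSet_Iic _) (hρ2 nn c)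
  have hrel : cbdry K (Punct L) m γ ∈ chainsIn K (Punct L) {y : Punct L | (y : L) ≠ ⊤} m :=
    chainsIn_mono (fun y hy htop => (Set.mem_Iio.mp hy).ne (Subtype.ext htop)) m
      (σ.cbdry_mem_chainsIn_Iio hγ)
  exact representation_shuffled_relative_homologous_general K hρ0 hρ1 hρ2' htop _ hrel
    (finite_initSegs γ _) (fun χ _ => (hA0 χ).1) (fun χ _ => hA1 χ) hA3

end
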